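/- The set {(σ1, σ2) ∈ ℝ² : σ1 and σ2 are nonnegative integer multiples of 4 and (σ1 − σ2)² = 4(σ1 + σ2)} equals {(2m(m+1), 2m(m−1)) : m ∈ ℤ} ∪ {(2m(m−1), 2m(m+1)) : m ∈ ℤ}; in particular, Γ₂(1, 1) equals this set. -/

import Mathlib

/-- The set `Γ₂(μ₁, μ₂)` of possible local masses for the singular sinh-Gordon equation:
pairs `(σ₁, σ₂)` with `σ_i = 4(n_{i1} μ₁ + n_{i2} μ₂)` for nonnegative integers `n_{ij}`,
satisfying `(σ₁ − σ₂)² = 4(μ₁ σ₁ + μ₂ σ₂)`. -/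
def Gamma2 (μ1 μ2 : ℝ) : Set (ℝ × ℝ) :=
  {p | (∃ n11 n12 n21 n22 : ℕ,
          p.1 = 4 * ((n11 : ℝ) * μ1 + (n12 : ℝ) * μ2) ∧
          p.2 = 4 * ((n21 : ℝ) * μ1 + (n22 : ℝ) * μ2)) ∧
       (p.1 - p.2) ^ 2 = 4 * (μ1 * p.1 + μ2 * p.2)}

/-!
Put `t = (x - y) / 4`. On the parabola `(x - y)² = 4 (x + y)` one has `x - y = 4t` and
`x + y = 4t²`, hence `x = 2t(t + 1)` and `y = 2t(t - 1)`. If `x = 4a` and `y = 4b`, then `t = a - b`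
is an integer; conversely, for integral `t` the products `t(t ± 1)` of consecutive integers are even
and nonnegative. The substitution `t ↦ -t` exchanges `x` and `y`, so the two families coincide.
-/

theorem sub_sq_eq_four_mul_add_iff_of_sub_eq {R : Type*} [CommRing R] [NoZeroDivisors R]
    [NeZero (2 : R)] {x y t : R} (hxy : x - y = 4 * t) :
    (x - y) ^ 2 = 4 * (x + y) ↔ x = 2 * t * (t + 1) ∧ y = 2 * t * (t - 1) := by
  have eight_ne_zero : (2 : R) ^ 3 ≠ 0 := pow_ne_zero 3 two_ne_zero
  constructor
  · intro h
    constructor <;> apply mul_left_cancel₀ eight_ne_zero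
    · linear_combination -h + (x - y + 4 * t + 4) * hxy
    · linear_combination -h + (x - y + 4 * t - 4) * hxy
  · rintro ⟨rfl, rfl⟩
    ring

theorem int_mul_add_one_nonneg (m : ℤ) : 0 ≤ m * (m + 1) := by
  rcases lt_or_ge m 0 with hm | hm
  · exact mul_nonneg_of_nonpos_of_nonpos hm.le (Int.add_one_le_of_lt hm)
  · exact mul_nonneg hm (Int.le_add_one hm)

theorem exists_nat_two_mul_mul_add_one_eq (R : Type*) [Ring R] (m : ℤ) :
    ∃ a : ℕ, 2 * (m : R) * (m + 1) = 4 * a := by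
  obtain ⟨k, hk⟩ := Int.two_dvd_mul_add_one m
  have k_nonneg : 0 ≤ k := by linarith [int_mul_add_one_nonneg m]
  lift k to ℕ using k_nonneg
  have hint : 2 * m * (m + 1) = 4 * (k : ℤ) := by linear_combination 2 * hk
  exact ⟨k, by exact_mod_cast congrArg (Int.cast : ℤ → R) hint⟩

theorem exists_nat_two_mul_mul_sub_one_eq (R : Type*) [Ring R] (m : ℤ) :
    ∃ b : ℕ, 2 * (m : R) * (m - 1) = 4 * b := by
  obtain ⟨b, hb⟩ := exists_nat_two_mul_mul_add_one_eq R (-m)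
  refine ⟨b, hb ▸ ?_⟩
  push_cast
  noncomm_ring

theorem exists_nat_four_mul_and_sub_sq_eq_iff {R : Type*} [CommRing R] [NoZeroDivisors R]
    [NeZero (2 : R)] {x y : R} :
    ((∃ a : ℕ, x = 4 * a) ∧ (∃ b : ℕ, y = 4 * b) ∧ (x - y) ^ 2 = 4 * (x + y)) ↔
      ∃ m : ℤ, x = 2 * m * (m + 1) ∧ y = 2 * m * (m - 1) := by
  constructor
  · rintro ⟨⟨a, rfl⟩, ⟨b, rfl⟩, h⟩
    have hsub : 4 * (a : R) - 4 * b = 4 * ((a - b : ℤ) : R) := by push_cast; ring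
    exact ⟨a - b, (sub_sq_eq_four_mul_add_iff_of_sub_eq hsub).mp h⟩
  · rintro ⟨m, rfl, rfl⟩
    have hsub : 2 * (m : R) * (m + 1) - 2 * m * (m - 1) = 4 * m := by ring
    exact ⟨exists_nat_two_mul_mul_add_one_eq R m, exists_nat_two_mul_mul_sub_one_eq R m,
      (sub_sq_eq_four_mul_add_iff_of_sub_eq hsub).mpr ⟨rfl, rfl⟩⟩

theorem exists_int_mul_sub_one_and_mul_add_one_iff {R : Type*} [Ring R] {x y : R} :
    (∃ m : ℤ, x = 2 * m * (m - 1) ∧ y = 2 * m * (m + 1)) ↔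
      ∃ m : ℤ, x = 2 * m * (m + 1) ∧ y = 2 * m * (m - 1) := by
  refine (Equiv.neg ℤ).exists_congr fun m => ?_
  have hadd : 2 * ((-m : ℤ) : R) * ((-m : ℤ) + 1) = 2 * m * (m - 1) := by push_cast; noncomm_ring
  have hsub : 2 * ((-m : ℤ) : R) * ((-m : ℤ) - 1) = 2 * m * (m + 1) := by push_cast; noncomm_ring
  rw [Equiv.neg_apply, hadd, hsub]

theorem mem_Gamma2_self_iff {μ : ℝ} {p : ℝ × ℝ} :
    p ∈ Gamma2 μ μ ↔ (∃ a : ℕ, p.1 = 4 * (a * μ)) ∧ (∃ b : ℕ, p.2 = 4 * (b * μ)) ∧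
      (p.1 - p.2) ^ 2 = 4 * (μ * (p.1 + p.2)) := by
  simp only [Gamma2, Set.mem_ofPred_eq, ← add_mul, ← mul_add]
  constructor
  · rintro ⟨⟨n11, n12, n21, n22, h1, h2⟩, h⟩
    exact ⟨⟨n11 + n12, by exact_mod_cast h1⟩, ⟨n21 + n22, by exact_mod_cast h2⟩, h⟩
  · rintro ⟨⟨a, ha⟩, ⟨b, hb⟩, h⟩
    exact ⟨⟨a, 0, b, 0, by simpa using ha, by simpa using hb⟩, h⟩

theorem Gamma2_one_one_eq :
    Gamma2 1 1 = {p : ℝ × ℝ | (∃ a : ℕ, p.1 = 4 * (a : ℝ)) ∧ (∃ b : ℕ, p.2 = 4 * (b : ℝ)) ∧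
      (p.1 - p.2) ^ 2 = 4 * (p.1 + p.2)} := by
  ext p
  simp only [mem_Gamma2_self_iff, mul_one, one_mul, Set.mem_ofPred_eq]

/-- The nonsingular case: the set of pairs of nonnegative integer multiples of `4` with
`(σ₁ − σ₂)² = 4(σ₁ + σ₂)` equals `{(2m(m+1), 2m(m−1)) : m ∈ ℤ} ∪ {(2m(m−1), 2m(m+1)) : m ∈ ℤ}`;
in particular `Γ₂(1,1)` equals this set. -/
theorem gamma2_one_one_explicit :
    ({p : ℝ × ℝ | (∃ a : ℕ, p.1 = 4 * (a : ℝ)) ∧ (∃ b : ℕ, p.2 = 4 * (b : ℝ)) ∧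
        (p.1 - p.2) ^ 2 = 4 * (p.1 + p.2)} =
      ({p : ℝ × ℝ | ∃ m : ℤ, p = (2 * (m : ℝ) * ((m : ℝ) + 1), 2 * (m : ℝ) * ((m : ℝ) - 1))} ∪
       {p : ℝ × ℝ | ∃ m : ℤ, p = (2 * (m : ℝ) * ((m : ℝ) - 1), 2 * (m : ℝ) * ((m : ℝ) + 1))})) ∧
    Gamma2 1 1 =
      ({p : ℝ × ℝ | ∃ m : ℤ, p = (2 * (m : ℝ) * ((m : ℝ) + 1), 2 * (m : ℝ) * ((m : ℝ) - 1))} ∪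
       {p : ℝ × ℝ | ∃ m : ℤ, p = (2 * (m : ℝ) * ((m : ℝ) - 1), 2 * (m : ℝ) * ((m : ℝ) + 1))}) := by
  rw [Gamma2_one_one_eq, and_self]
  ext ⟨x, y⟩
  simp only [Set.mem_union, Set.mem_ofPred_eq, Prod.mk.injEq]
  rw [exists_int_mul_sub_one_and_mul_add_one_iff, or_self]
  exact exists_nat_four_mul_and_sub_sq_eq_iff
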